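/- arXiv:1201.4140 — 4 statements merged into one kernel-verified Lean document; each statement's English description precedes it below -/
import Mathlib

section
/- Let R be a commutative ring, X a finite set, and σ a permutation of X, with permutation matrix P_σ (the X×X matrix over R with (i,j) entry 1 if i = σ(j) and 0 otherwise). Then the characteristic polynomial of P_σ satisfies det(T·I − P_σ) = (T − 1)^{|Fix(σ)|} · ∏_{c ∈ cycleType(σ)} (T^c − 1), the product being over the multiset of lengths of the nontrivial cycles of σ. -/
/-!
The argument is by induction on the disjoint cycle decomposition of `σ`. Write `P_σ` for the
permutation matrix and `n = |X|`.

* For a single cycle `σ` of length `k`, expand the determinant of `T - P_σ` over all permutations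
  `π`. A term is nonzero only if `π i ∈ {i, σ i}` for every `i`. By injectivity of `π`, once `π`
  moves a point it follows `σ` along the whole orbit of that point, so `π = 1` or `π = σ`
  (`eq_one_or_eq_of_forall`). These two terms are `T ^ k * (T - 1) ^ (n - k)` and
  `-(T - 1) ^ (n - k)` (`charpoly_cycleMat`).
* For disjoint `σ` and `τ` one has `P_{στ} + 1 = P_σ + P_τ`, whence
  `(T - 1) (T - P_{στ}) = (T - P_σ) (T - P_τ)`. Taking determinants gives
  `(T - 1) ^ n * χ_{στ} = χ_σ * χ_τ` (`charpoly_permMat_mul`), and `T - 1` is monic, hence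
  cancellable over any commutative ring. The claimed right-hand sides satisfy the same relation
  because `|Fix σ| + |Fix τ| = n + |Fix (στ)|`.
-/

namespace PermCharpoly

/-- The permutation matrix of `σ` in the column convention, with entry `1` at `(σ j, j)`. It is the
transpose of Mathlib's `Equiv.Perm.permMatrix`. -/
def permMat (R : Type*) [CommRing R] {X : Type*} [DecidableEq X] (σ : Equiv.Perm X) :
    Matrix X X R :=
  Matrix.of fun i j : X => if i = σ j then (1 : R) else 0

variable {R : Type*} [CommRing R] {X : Type*} [DecidableEq X]

theorem permMat_one : permMat R (1 : Equiv.Perm X) = 1 := by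
  ext i j
  by_cases h : i = j <;> simp [permMat, Matrix.one_apply, h]

theorem permMat_mul [Fintype X] (σ τ : Equiv.Perm X) : permMat R (σ * τ) = permMat R σ * permMat R τ := by
  ext i j
  by_cases h : i = σ (τ j) <;> simp [permMat, Matrix.mul_apply, h]

/-- For every `j`, the `j`-th column of one of `P_σ`, `P_τ` is that of the identity, and the `j`-th
column of the other is that of `P_{στ}`. -/
theorem permMat_mul_add_one {σ τ : Equiv.Perm X} (h : σ.Disjoint τ) :
    permMat R (σ * τ) + 1 = permMat R σ + permMat R τ := by
  ext i j
  rcases h j with hj | hj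
  · have h2 : σ (τ j) = τ j := by
      have := congrArg (fun f : Equiv.Perm X => f j) h.commute.eq
      simpa [hj] using this
    simp [permMat, Matrix.one_apply, hj, h2, add_comm]
  · simp [permMat, Matrix.one_apply, hj]

variable [Fintype X]

theorem charpoly_permMat_mul {σ τ : Equiv.Perm X} (h : σ.Disjoint τ) :
    (Polynomial.X - 1 : Polynomial R) ^ Fintype.card X * (permMat R (σ * τ)).charpoly =
      (permMat R σ).charpoly * (permMat R τ).charpoly := by
  have key : (Polynomial.X - 1 : Polynomial R) • (permMat R (σ * τ)).charmatrix =
      (permMat R σ).charmatrix * (permMat R τ).charmatrix := by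
    have hmul := congrArg (Polynomial.C (R := R)).mapMatrix (permMat_mul (R := R) σ τ)
    have hadd := congrArg (Polynomial.C (R := R)).mapMatrix (permMat_mul_add_one (R := R) h)
    rw [map_mul] at hmul
    rw [map_add, map_add, map_one] at hadd
    simp only [Matrix.charmatrix, Matrix.scalar_apply, ← Matrix.smul_one_eq_diagonal]
    generalize (Polynomial.C (R := R)).mapMatrix (permMat R (σ * τ)) = M at *
    generalize (Polynomial.C (R := R)).mapMatrix (permMat R σ) = A at *
    generalize (Polynomial.C (R := R)).mapMatrix (permMat R τ) = B at *
    have hM : M = A + B - 1 := eq_sub_of_add_eq hadd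
    have hX : (Polynomial.X : Polynomial R) • M =
        (Polynomial.X : Polynomial R) • A + (Polynomial.X : Polynomial R) • B
          - (Polynomial.X : Polynomial R) • 1 := by
      rw [hM, smul_sub, smul_add]
    simp only [sub_smul, smul_sub, one_smul, sub_mul, mul_sub, smul_mul_assoc, mul_smul_comm,
      one_mul, mul_one, hX, ← hmul]
    abel
  have := congrArg Matrix.det key
  rwa [Matrix.det_smul, Matrix.det_mul] at this

theorem eq_one_or_eq_of_forall {Y : Type*} [Finite Y] {σ π : Equiv.Perm Y} (hσ : σ.IsCycle)
    (h : ∀ i, π i = i ∨ π i = σ i) : π = 1 ∨ π = σ := by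
  by_cases h1 : π = 1
  · exact Or.inl h1
  right
  obtain ⟨a, ha⟩ : ∃ a, π a ≠ a := by
    by_contra! hc
    exact h1 (Equiv.ext hc)
  have hpow : ∀ n : ℕ, π ((σ ^ n) a) = σ ((σ ^ n) a) ∧ π ((σ ^ n) a) ≠ (σ ^ n) a := by
    intro n
    induction n with
    | zero => exact ⟨(h a).resolve_left ha, ha⟩
    | succ n ih =>
      rw [pow_succ', Equiv.Perm.mul_apply]
      -- `σ b = π b` with `b = σ ^ n a` moved by `π`, so `π` also moves `π b` by injectivity.
      have hne : π (σ ((σ ^ n) a)) ≠ σ ((σ ^ n) a) := by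
        rw [← ih.1]
        exact fun hc => ih.2 (π.injective hc)
      exact ⟨(h _).resolve_left hne, hne⟩
  have haσ : σ a ≠ a := by
    rw [← (h a).resolve_left ha]
    exact ha
  ext i
  by_cases hi : σ i = i
  · rcases h i with h' | h'
    · rw [h', hi]
    · exact h'
  · obtain ⟨n, rfl⟩ := hσ.exists_pow_eq haσ hi
    exact (hpow n).1

theorem charpoly_cycleMat {σ : Equiv.Perm X} (hσ : σ.IsCycle) :
    (permMat R σ).charpoly =
      (Polynomial.X - 1) ^ (Finset.univ.filter fun x => σ x = x).card *
        (Polynomial.X ^ σ.support.card - 1) := by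
  have hsupp : (Finset.univ.filter fun x => ¬ σ x = x) = σ.support := by
    ext x
    simp
  have hdiag : ∏ i, (permMat R σ).charmatrix ((1 : Equiv.Perm X) i) i =
      (Polynomial.X - 1) ^ (Finset.univ.filter fun x => σ x = x).card *
        Polynomial.X ^ σ.support.card := by
    rw [← hsupp, ← Finset.prod_const, ← Finset.prod_const, ← Finset.prod_ite]
    refine Finset.prod_congr rfl fun i _ => ?_
    by_cases hi : σ i = i
    · simp [permMat, hi]
    · simp [permMat, hi, Ne.symm hi]
  have hcyc : ∏ i, (permMat R σ).charmatrix (σ i) i =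
      (Polynomial.X - 1) ^ (Finset.univ.filter fun x => σ x = x).card *
        (-1) ^ σ.support.card := by
    rw [← hsupp, ← Finset.prod_const, ← Finset.prod_const, ← Finset.prod_ite]
    refine Finset.prod_congr rfl fun i _ => ?_
    by_cases hi : σ i = i
    · simp [permMat, hi]
    · simp [permMat, hi]
  rw [Matrix.charpoly, Matrix.det_apply', Fintype.sum_eq_add 1 σ hσ.ne_one.symm, hdiag, hcyc,
    hσ.sign]
  · have hsq : ((-1 : Polynomial R) ^ σ.support.card) * (-1) ^ σ.support.card = 1 := by
      rw [← mul_pow]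
      simp
    push_cast
    simp only [Equiv.Perm.sign_one, Units.val_one, Int.cast_one]
    linear_combination
      (-(Polynomial.X - 1) ^ (Finset.univ.filter fun x => σ x = x).card) * hsq
  · rintro π ⟨h1, h2⟩
    obtain ⟨i, hi⟩ : ∃ i, ¬ (π i = i ∨ π i = σ i) := by
      by_contra! hc
      exact (eq_one_or_eq_of_forall hσ hc).elim h1 h2
    push Not at hi
    rw [Finset.prod_eq_zero (Finset.mem_univ i), mul_zero]
    simp [permMat, hi.1, hi.2]

theorem card_fixed_add {σ τ : Equiv.Perm X} (h : σ.Disjoint τ) :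
    (Finset.univ.filter fun x => σ x = x).card + (Finset.univ.filter fun x => τ x = x).card =
      Fintype.card X + (Finset.univ.filter fun x => (σ * τ) x = x).card := by
  have key : ∀ ρ : Equiv.Perm X,
      (Finset.univ.filter fun x => ρ x = x).card + ρ.support.card = Fintype.card X := by
    intro ρ
    have := Finset.card_filter_add_card_filter_not (s := Finset.univ) (fun x => ρ x = x)
    exact this
  have := h.card_support_mul
  have h1 := key σ
  have h2 := key τ
  have h3 := key (σ * τ)
  omega

end PermCharpoly

/-- The characteristic polynomial of the permutation matrix of `σ` equals
`(T - 1) ^ |Fix σ| * ∏_{c ∈ cycleType σ} (T^c - 1)`. -/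
theorem stmt_2 {R : Type*} [CommRing R] {X : Type*} [Fintype X] [DecidableEq X]
    (σ : Equiv.Perm X) :
    (Matrix.of fun i j : X => if i = σ j then (1 : R) else 0).charpoly =
      (Polynomial.X - 1) ^ (Finset.univ.filter fun x => σ x = x).card *
        (σ.cycleType.map fun c => Polynomial.X ^ c - 1).prod := by
  change (PermCharpoly.permMat R σ).charpoly = _
  induction σ using Equiv.Perm.cycle_induction_on with
  | base_one => simp [PermCharpoly.permMat_one, Matrix.charpoly_one]
  | base_cycles σ hσ =>
    rw [PermCharpoly.charpoly_cycleMat hσ, hσ.cycleType]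
    simp
  | induction_disjoint σ τ hd _ hσ hτ =>
    have hmonic : (Polynomial.X - 1 : Polynomial R).Monic := by
      simpa using Polynomial.monic_X_sub_C (1 : R)
    apply (hmonic.pow (Fintype.card X)).isRegular.left
    change _ * _ = _ * _
    rw [PermCharpoly.charpoly_permMat_mul hd, hσ, hτ, hd.cycleType_mul, Multiset.map_add,
      Multiset.prod_add, ← mul_assoc (_ ^ Fintype.card X), ← pow_add,
      ← PermCharpoly.card_fixed_add hd, pow_add]
    ring
end

section
/- Let N be a positive integer and define Λ_N(τ) = N(N−1)/24 + N·∑_{k≥1} σ₁(k)(q^k − N·q^{Nk}) for τ ∈ ℍ, q = e^{2πiτ}. Then Λ_N is a modular form of weight 2 for Γ₀(N): for every γ = (a b; c d) ∈ Γ₀(N) and τ ∈ ℍ, Λ_N(γτ) = (cτ+d)²·Λ_N(τ). -/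
/-!
The form `Λ_N` is a combination of values of the quasimodular Eisenstein series
`E₂ = 1 - 24 ∑ σ₁(k) q^k`, namely `Λ_N(τ) = (N / 24) (N E₂(Nτ) - E₂(τ))` (`Lam_eq_E2`).
Under `γ = (a b; c d) ∈ SL₂(ℤ)` one has `E₂(γτ) = (cτ+d)² E₂(τ) - C c (cτ+d)` for a constant `C`
(`E2_mobius`). If `c = N c'`, then `N • γτ = γ'(Nτ)` with `γ' = (a Nb; c' d) ∈ SL₂(ℤ)`, whose
automorphy factor at `Nτ` is again `c' N τ + d = cτ + d`. Hence the defect of `N E₂(Nτ)` is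
`N C c' (cτ+d) = C c (cτ+d)`, the same as that of `E₂(τ)`, and the two cancel in the difference.
-/

/-- `q = e^{2πiτ}`. -/
noncomputable def qc (τ : ℂ) : ℂ := Complex.exp (2 * Real.pi * Complex.I * τ)

/-- The Dedekind eta function `η(τ) = e^{πiτ/12} ∏_{n ≥ 1} (1 - q^n)`. -/
noncomputable def eta (τ : ℂ) : ℂ :=
  Complex.exp (Real.pi * Complex.I * τ / 12) * ∏' n : ℕ, (1 - qc τ ^ (n + 1))

/-- `σ₁(k)`, the sum of the divisors of `k`. -/
def sigma1 (k : ℕ) : ℕ := ∑ d ∈ k.divisors, d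

/-- The weight-two Eisenstein-type form
`Λ_N(τ) = N(N-1)/24 + N ∑_{k ≥ 1} σ₁(k)(q^k - N q^{Nk})`. -/
noncomputable def Lam (N : ℕ) (τ : ℂ) : ℂ :=
  (N : ℂ) * ((N : ℂ) - 1) / 24 +
    (N : ℂ) * ∑' k : ℕ, (sigma1 (k + 1) : ℂ) *
      (qc τ ^ (k + 1) - (N : ℂ) * qc τ ^ (N * (k + 1)))

open EisensteinSeries UpperHalfPlane in
/-- The quasimodular transformation law of `E₂`, with the Möbius action written out. -/
lemma E2_mobius (a b c d : ℤ) (h : a * d - b * c = 1) (z w : ℍ)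
    (hw : (w : ℂ) = (a * z + b) / (c * z + d)) :
    E2 w = (c * z + d) ^ 2 * E2 z -
      1 / (2 * riemannZeta 2) * (2 * Real.pi * Complex.I * c) * (c * z + d) := by
  let γ : Matrix.SpecialLinearGroup (Fin 2) ℤ := ⟨!![a, b; c, d], by
    rw [Matrix.det_fin_two_of]; exact h⟩
  have hden : denom γ z = c * z + d := by
    rw [ModularGroup.denom_apply]
    simp [γ]
  have hne : (c * z + d : ℂ) ≠ 0 := hden ▸ denom_ne_zero γ z
  have hγ : γ • z = w := by
    ext1
    rw [hw, coe_specialLinearGroup_apply]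
    simp [γ]
  have key := congrFun (E2_slash_action γ) z
  rw [ModularForm.SL_slash_apply, hγ] at key
  simp only [Pi.sub_apply, Pi.smul_apply, smul_eq_mul, D2, hden] at key
  have hc : ((γ 1 0 : ℤ) : ℂ) = c := by simp [γ]
  rw [hc, zpow_neg, zpow_ofNat] at key
  rw [← div_eq_mul_inv, div_eq_iff (pow_ne_zero 2 hne)] at key
  rw [key]
  generalize (1 / (2 * riemannZeta 2)) = K
  field_simp

lemma hasSum_sigma1_qc (z : UpperHalfPlane) :
    HasSum (fun k : ℕ ↦ (sigma1 (k + 1) : ℂ) * qc z ^ (k + 1))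
      ((1 - EisensteinSeries.E2 z) / 24) := by
  have h := (hasSum_nat_add_iff' 1).mpr (EisensteinSeries.hasSum_qExpansion_E2 z)
  convert! h.mul_left (-1 / 24 : ℂ) using 1
  · ext k
    simp only [qc, sigma1, ArithmeticFunction.sigma_one_apply, Nat.succ_ne_zero, if_false, smul_eq_mul]
    ring
  · simp
    ring

lemma Lam_eq_E2 (N : ℕ) (z w : UpperHalfPlane) (hw : (w : ℂ) = N * z) :
    Lam N z = (N : ℂ) / 24 * (N * EisensteinSeries.E2 w - EisensteinSeries.E2 z) := by
  have hq : qc w = qc z ^ N := by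
    rw [qc, qc, ← Complex.exp_nat_mul, hw]
    ring_nf
  have h := (hasSum_sigma1_qc z).sub ((hasSum_sigma1_qc w).mul_left (N : ℂ))
  rw [Lam, tsum_congr (fun k ↦ ?_), h.tsum_eq]
  · ring
  · rw [hq, pow_mul]
    ring

/-- `Λ_N` is a modular form of weight 2 for `Γ₀(N)`:
`Λ_N(γτ) = (cτ+d)²·Λ_N(τ)` for every `γ = (a b; c d) ∈ Γ₀(N)` and `τ ∈ ℍ`. -/
theorem stmt_8 (N : ℕ) (hN : 0 < N) (a b c d : ℤ) (h : a * d - b * c = 1)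
    (hc : (N : ℤ) ∣ c) (τ : ℂ) (hτ : 0 < τ.im) :
    Lam N ((a * τ + b) / (c * τ + d)) = (c * τ + d) ^ 2 * Lam N τ := by
  obtain ⟨c', rfl⟩ := hc
  have hN' : (0 : ℝ) < N := by exact_mod_cast hN
  let γ : Matrix.SpecialLinearGroup (Fin 2) ℤ := ⟨!![a, b; N * c', d], by
    rw [Matrix.det_fin_two_of]; exact h⟩
  let z : UpperHalfPlane := ⟨τ, hτ⟩
  let Nz : UpperHalfPlane := ⟨N * τ, by simpa using mul_pos hN' hτ⟩
  let w : UpperHalfPlane := γ • z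
  have hw : (w : ℂ) = (a * τ + b) / ((N * c' : ℤ) * τ + d) := by
    simp only [w, UpperHalfPlane.coe_specialLinearGroup_apply]
    simp [γ, z]
  let Nw : UpperHalfPlane := ⟨N * w, by simpa using mul_pos hN' w.im_pos⟩
  have e1 := E2_mobius a b (N * c') d h z w hw
  have e2 := E2_mobius a (N * b) c' d (by linear_combination h) Nz Nw (by
    change (N : ℂ) * w = (a * (N * τ) + (N * b : ℤ)) / (c' * (N * τ) + d)
    rw [hw]
    push_cast
    rw [← mul_div_assoc]
    congr 1 <;> ring)
  have l1 := Lam_eq_E2 N z Nz rfl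
  have l2 := Lam_eq_E2 N w Nw rfl
  rw [← hw, l2, show τ = (z : ℂ) from rfl, l1, e1, e2, show (Nz : ℂ) = N * z from rfl]
  push_cast
  ring
end

section
/- For every τ ∈ ℍ: −24·Λ₂(τ) + 8·Λ₄(τ) = 2·η(τ)⁸/η(2τ)⁴. (This is the identity from the 2B row of the paper's table of twining data: the eta-quotient expression for T̃_{2B} agrees with its expression in terms of the weight-two Eisenstein-type forms Λ_N.) -/
open Filter Topology

/-- `H_n = ∏_{i=1}^n (1 + q^i) / (1 - q^i)`. -/
noncomputable def Hprod (q : ℂ) (n : ℕ) : ℂ :=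
  ∏ i ∈ Finset.range n, (1 + q ^ (i + 1)) / (1 - q ^ (i + 1))

/-- The sum `S(x) = ∑_{k ≥ 1} x^k / (1 - x^k)²`, a Lambert series for `∑ σ₁(k) x^k`. -/
noncomputable def lambert (x : ℂ) : ℂ := ∑' k : ℕ, x ^ (k + 1) / (1 - x ^ (k + 1)) ^ 2

lemma norm_pow_succ_lt_one {q : ℂ} (hq : ‖q‖ < 1) (k : ℕ) : ‖q ^ (k + 1)‖ < 1 := by
  rw [norm_pow]
  exact pow_lt_one₀ (norm_nonneg _) hq (by simp)

lemma one_sub_ne_zero' {y : ℂ} (hy : ‖y‖ < 1) : 1 - y ≠ 0 := by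
  intro h
  rw [← sub_eq_zero.mp h] at hy
  simp at hy

lemma one_add_ne_zero' {y : ℂ} (hy : ‖y‖ < 1) : 1 + y ≠ 0 := by
  have := one_sub_ne_zero' (y := -y) (by simpa using hy)
  simpa using this

lemma Hprod_succ (q : ℂ) (n : ℕ) :
    Hprod q (n + 1) = Hprod q n * ((1 + q ^ (n + 1)) / (1 - q ^ (n + 1))) := by
  rw [Hprod, Finset.prod_range_succ, Hprod]

/-! ### The finite identity -/

/-- The `k`-th summand `(-q)^k / (1 + q^k)² · H_{n+k} H_{n-k} H_n²` of the finite identity; it is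
used for `k ≤ n` only, so that the subtraction of natural numbers is the honest one. -/
noncomputable def wzF (q : ℂ) (n k : ℕ) : ℂ :=
  (-1) ^ k * (q ^ k / (1 + q ^ k) ^ 2) * Hprod q (n + k) * Hprod q (n - k) * Hprod q n ^ 2

/-- The WZ companion
`G(n, k) = -a (1 + a²) / ((1 - a)² (1 - a²)) · (-1)^k H_{n+k} H_{n+1-k} H_n²`, `a = q^{n+1}`,
of `wzF`; it is used for `k ≤ n + 1` only. -/
noncomputable def wzG (q : ℂ) (n k : ℕ) : ℂ :=
  -(q ^ (n + 1) * (1 + (q ^ (n + 1)) ^ 2)) /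
      ((1 - q ^ (n + 1)) ^ 2 * ((1 - q ^ (n + 1)) * (1 + q ^ (n + 1)))) *
    ((-1) ^ k * Hprod q (n + k) * Hprod q (n + 1 - k) * Hprod q n ^ 2)

lemma wz_step {q : ℂ} (hq : ‖q‖ < 1) {n k : ℕ} (hk : k < n) :
    wzF q (n + 1) (k + 1) - wzF q n (k + 1) = wzG q n (k + 2) - wzG q n (k + 1) := by
  obtain ⟨r, rfl⟩ : ∃ r, n = k + 1 + r := ⟨n - (k + 1), by omega⟩
  have e1 : k + 1 + r + 1 - (k + 1) = r + 1 := by omega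
  have e2 : k + 1 + r - (k + 1) = r := by omega
  have e3 : k + 1 + r + 1 - (k + 2) = r := by omega
  have e4 : k + 1 + r + 1 + (k + 1) = (k + 1 + r + (k + 1)) + 1 := by omega
  have e5 : k + 1 + r + (k + 2) = (k + 1 + r + (k + 1)) + 1 := by omega
  have a1 : q ^ (k + 1 + r + 1) = q ^ (k + 1) * q ^ (r + 1) := by ring
  have a2 : q ^ (k + 1 + r + (k + 1) + 1) = (q ^ (k + 1)) ^ 2 * q ^ (r + 1) := by ring
  have n1 := one_add_ne_zero' (norm_pow_succ_lt_one hq k)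
  have n2 := one_sub_ne_zero' (norm_pow_succ_lt_one hq r)
  have n3 := one_sub_ne_zero' (norm_pow_succ_lt_one hq (k + 1 + r))
  have n4 := one_add_ne_zero' (norm_pow_succ_lt_one hq (k + 1 + r))
  have n5 := one_sub_ne_zero' (norm_pow_succ_lt_one hq (k + 1 + r + (k + 1)))
  rw [a1] at n3 n4
  rw [a2] at n5
  simp only [wzF, wzG, e1, e2, e3, e4, e5, Hprod_succ, a1, a2]
  rw [pow_succ (-1 : ℂ) (k + 1)]
  clear a1 a2
  generalize Hprod q (k + 1 + r + (k + 1)) = X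
  generalize Hprod q r = Y
  generalize Hprod q (k + 1 + r) = Z
  generalize (-1 : ℂ) ^ (k + 1) = s
  generalize q ^ (k + 1) = K at *
  generalize q ^ (r + 1) = R at *
  field_simp
  ring

lemma wz_sum {q : ℂ} (hq : ‖q‖ < 1) (n m : ℕ) (hm : m ≤ n) :
    ∑ k ∈ Finset.range m, wzF q (n + 1) (k + 1) =
      ∑ k ∈ Finset.range m, wzF q n (k + 1) + wzG q n (m + 1) - wzG q n 1 := by
  induction m with
  | zero => simp
  | succ m ih =>
    rw [Finset.sum_range_succ, Finset.sum_range_succ, ih (by omega)]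
    linear_combination wz_step hq (show m < n by omega)

/-- The lower boundary term of the telescoping: by the symmetry `k ↦ -k`, `G(n, 1)` is half of the
change of the summand `k = 0`. -/
lemma wz_lower {q : ℂ} (hq : ‖q‖ < 1) (n : ℕ) :
    8 * wzG q n 1 = Hprod q (n + 1) ^ 4 - Hprod q n ^ 4 := by
  have n3 := one_sub_ne_zero' (norm_pow_succ_lt_one hq n)
  have n4 := one_add_ne_zero' (norm_pow_succ_lt_one hq n)
  simp only [wzG, Nat.add_sub_cancel, Hprod_succ]
  generalize Hprod q n = X
  generalize q ^ (n + 1) = a at *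
  field_simp
  ring

/-- The upper boundary term of the telescoping cancels the summand that is new at `n + 1`. -/
lemma wz_upper {q : ℂ} (hq : ‖q‖ < 1) (n : ℕ) :
    wzF q (n + 1) (n + 1) = -wzG q n (n + 1) := by
  have n3 := one_sub_ne_zero' (norm_pow_succ_lt_one hq n)
  have n4 := one_add_ne_zero' (norm_pow_succ_lt_one hq n)
  have n5 := one_sub_ne_zero' (norm_pow_succ_lt_one hq (n + (n + 1)))
  have e1 : n + 1 + (n + 1) = (n + (n + 1)) + 1 := by omega
  have a1 : q ^ (n + (n + 1) + 1) = q ^ (n + 1) * q ^ (n + 1) := by ring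
  rw [a1] at n5
  simp only [wzF, wzG, Nat.sub_self, e1, Hprod_succ, a1]
  generalize Hprod q (n + (n + 1)) = X
  generalize Hprod q n = Y
  generalize (-1 : ℂ) ^ (n + 1) = s
  clear a1
  generalize q ^ (n + 1) = a at *
  have : 1 - a * a = (1 - a) * (1 + a) := by ring
  rw [this]
  field_simp

lemma finite_identity {q : ℂ} (hq : ‖q‖ < 1) (n : ℕ) :
    Hprod q n ^ 4 + 8 * ∑ k ∈ Finset.range n, wzF q n (k + 1) = 1 := by
  induction n with
  | zero => simp [Hprod]
  | succ n ih =>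
    rw [Finset.sum_range_succ, wz_sum hq n n le_rfl, wz_upper hq]
    linear_combination ih - wz_lower hq n

/-! ### Letting `n` tend to infinity -/

lemma tprod_one_sub_ne_zero {q : ℂ} (hq : ‖q‖ < 1) : ∏' n : ℕ, (1 - q ^ (n + 1)) ≠ 0 := by
  have h := tprod_one_add_ne_zero_of_summable (f := fun n : ℕ ↦ -q ^ (n + 1))
    (fun i ↦ by simpa [← sub_eq_add_neg] using one_sub_ne_zero' (norm_pow_succ_lt_one hq i))
    (by simpa using (summable_nat_add_iff 1).mpr (summable_geometric_of_lt_one (norm_nonneg q) hq))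
  simpa [← sub_eq_add_neg] using h

lemma norm_sq_lt_one {q : ℂ} (hq : ‖q‖ < 1) : ‖q ^ 2‖ < 1 := norm_pow_succ_lt_one hq 1

lemma tendsto_Hprod {q : ℂ} (hq : ‖q‖ < 1) :
    Tendsto (Hprod q) atTop (𝓝 ((∏' n : ℕ, (1 - (q ^ 2) ^ (n + 1))) /
      (∏' n : ℕ, (1 - q ^ (n + 1))) ^ 2)) := by
  have h1 := (ModularForm.multipliable_one_sub_pow hq).hasProd.tendsto_prod_nat
  have h2 := (ModularForm.multipliable_one_sub_pow (norm_sq_lt_one hq)).hasProd.tendsto_prod_nat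
  refine (h2.div (h1.pow 2) (pow_ne_zero 2 (tprod_one_sub_ne_zero hq))).congr fun n ↦ ?_
  rw [Pi.div_apply, ← Finset.prod_pow, ← Finset.prod_div_distrib, Hprod]
  refine Finset.prod_congr rfl fun i _ ↦ ?_
  have n3 := one_sub_ne_zero' (norm_pow_succ_lt_one hq i)
  rw [← pow_mul, mul_comm 2, pow_mul]
  field_simp
  ring

lemma summable_lambert {x : ℂ} (hx : ‖x‖ < 1) :
    Summable fun k : ℕ ↦ x ^ (k + 1) / (1 - x ^ (k + 1)) ^ 2 := by
  have hs : Summable fun k : ℕ ↦ ‖x‖ ^ (k + 1) / (1 - ‖x‖) ^ 2 :=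
    ((summable_nat_add_iff 1).mpr (summable_geometric_of_lt_one (norm_nonneg x) hx)).div_const _
  refine .of_norm_bounded hs fun k ↦ ?_
  rw [norm_div, norm_pow, norm_pow]
  have h0 : 0 < 1 - ‖x‖ := by linarith
  have h1 : 1 - ‖x‖ ≤ ‖1 - x ^ (k + 1)‖ := by
    have h2 := norm_sub_norm_le 1 (x ^ (k + 1))
    have h3 : ‖x‖ ^ (k + 1) ≤ ‖x‖ := pow_le_of_le_one (norm_nonneg _) hx.le (by simp)
    rw [norm_pow, norm_one] at h2
    linarith
  gcongr

lemma plus_eq_minus {q : ℂ} (hq : ‖q‖ < 1) (k : ℕ) :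
    q ^ (k + 1) / (1 + q ^ (k + 1)) ^ 2 = q ^ (k + 1) / (1 - q ^ (k + 1)) ^ 2
      - 4 * ((q ^ 2) ^ (k + 1) / (1 - (q ^ 2) ^ (k + 1)) ^ 2) := by
  have n3 := one_sub_ne_zero' (norm_pow_succ_lt_one hq k)
  have n4 := one_add_ne_zero' (norm_pow_succ_lt_one hq k)
  rw [← pow_mul, mul_comm 2, pow_mul]
  generalize q ^ (k + 1) = y at *
  have : 1 - y ^ 2 = (1 - y) * (1 + y) := by ring
  rw [this]
  field_simp
  ring

lemma hasSum_plus {q : ℂ} (hq : ‖q‖ < 1) :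
    HasSum (fun k : ℕ ↦ q ^ (k + 1) / (1 + q ^ (k + 1)) ^ 2) (lambert q - 4 * lambert (q ^ 2)) := by
  simp only [plus_eq_minus hq]
  exact (summable_lambert hq).hasSum.sub
    ((summable_lambert (norm_sq_lt_one hq)).hasSum.mul_left 4)

/-- The limit of the finite identity, with denominators cleared. -/
lemma infinite_identity {q : ℂ} (hq : ‖q‖ < 1) :
    (∏' n : ℕ, (1 - (q ^ 2) ^ (n + 1))) ^ 4 *
      (1 + 8 * ∑' k : ℕ, (-1) ^ (k + 1) * (q ^ (k + 1) / (1 + q ^ (k + 1)) ^ 2)) =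
    (∏' n : ℕ, (1 - q ^ (n + 1))) ^ 8 := by
  have hP := tprod_one_sub_ne_zero hq
  have hH := tendsto_Hprod hq
  set P := ∏' n : ℕ, (1 - q ^ (n + 1))
  set P2 := ∏' n : ℕ, (1 - (q ^ 2) ^ (n + 1))
  set h := P2 / P ^ 2 with hh
  obtain ⟨C, hC⟩ := (Metric.isBounded_range_of_tendsto _ hH).exists_norm_le
  have hC (n : ℕ) : ‖Hprod q n‖ ≤ C := hC _ ⟨n, rfl⟩
  have hC0 : 0 ≤ C := (norm_nonneg _).trans (hC 0)
  have key : Tendsto (fun n ↦ ∑' k : ℕ, if k < n then wzF q n (k + 1) else 0) atTop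
      (𝓝 (∑' k : ℕ, (-1) ^ (k + 1) * (q ^ (k + 1) / (1 + q ^ (k + 1)) ^ 2) * h * h * h ^ 2)) := by
    refine tendsto_tsum_of_dominated_convergence
      (bound := fun k ↦ ‖q ^ (k + 1) / (1 + q ^ (k + 1)) ^ 2‖ * C * C * C ^ 2)
      (((hasSum_plus hq).summable.norm.mul_right _).mul_right _ |>.mul_right _) (fun k ↦ ?_)
      (.of_forall fun n k ↦ ?_)
    · have t1 : Tendsto (fun n ↦ Hprod q (n + (k + 1))) atTop (𝓝 h) :=
        hH.comp (tendsto_add_atTop_nat (k + 1))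
      have t2 : Tendsto (fun n ↦ Hprod q (n - (k + 1))) atTop (𝓝 h) :=
        hH.comp (tendsto_sub_atTop_nat (k + 1))
      refine (((tendsto_const_nhds.mul t1).mul t2).mul (hH.pow 2)).congr' ?_
      filter_upwards [eventually_gt_atTop k] with n hn
      rw [if_pos hn, wzF]
    · split_ifs with hk
      · simp only [wzF, norm_mul, norm_pow, norm_neg, norm_one, one_pow, one_mul]
        gcongr <;> apply hC
      · rw [norm_zero]
        positivity
  have fin (n : ℕ) : (∑' k : ℕ, if k < n then wzF q n (k + 1) else 0) =
      ∑ k ∈ Finset.range n, wzF q n (k + 1) := by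
    rw [tsum_eq_sum (s := Finset.range n) (fun k hk ↦ if_neg (by simpa using hk))]
    exact Finset.sum_congr rfl fun k hk ↦ if_pos (by simpa using hk)
  simp only [fin, tsum_mul_right] at key
  have lim := tendsto_nhds_unique ((hH.pow 4).add (key.const_mul 8))
    (tendsto_const_nhds.congr fun n ↦ (finite_identity hq n).symm)
  have lim' : h ^ 4 * (1 + 8 * ∑' k : ℕ, (-1) ^ (k + 1) *
      (q ^ (k + 1) / (1 + q ^ (k + 1)) ^ 2)) = 1 := by
    linear_combination lim
  rw [show P2 = h * P ^ 2 by rw [hh]; field_simp]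
  linear_combination P ^ 8 * lim'

/-! ### The Eisenstein side -/

/-- Splitting by the parity of `k` turns the alternating series into Lambert series. -/
lemma alternating_eq {q : ℂ} (hq : ‖q‖ < 1) :
    ∑' k : ℕ, (-1) ^ (k + 1) * (q ^ (k + 1) / (1 + q ^ (k + 1)) ^ 2) =
      -lambert q + 6 * lambert (q ^ 2) - 8 * lambert (q ^ 4) := by
  have h1 := hasSum_plus hq
  have h2 := hasSum_plus (norm_sq_lt_one hq)
  rw [← pow_mul] at h2
  have ho : Summable fun k : ℕ ↦ q ^ (2 * k + 1) / (1 + q ^ (2 * k + 1)) ^ 2 :=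
    h1.summable.comp_injective (i := fun k ↦ 2 * k) (fun a b h ↦ by simpa using h)
  have e (k : ℕ) : (q ^ 2) ^ (k + 1) = q ^ (2 * k + 1 + 1) := by ring
  simp only [e] at h2
  have s1 := tsum_even_add_odd (f := fun k ↦ q ^ (k + 1) / (1 + q ^ (k + 1)) ^ 2) ho h2.summable
  have s2 := tsum_even_add_odd
    (f := fun k ↦ (-1) ^ (k + 1) * (q ^ (k + 1) / (1 + q ^ (k + 1)) ^ 2))
    (by simpa [pow_succ, pow_mul] using ho.neg) (by simpa [pow_succ, pow_mul] using h2.summable)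
  have p1 (k : ℕ) : (-1 : ℂ) ^ (2 * k + 1) = -1 := by simp [pow_succ, pow_mul]
  have p2 (k : ℕ) : (-1 : ℂ) ^ (2 * k + 1 + 1) = 1 := by simp [pow_succ, pow_mul]
  simp only [p1, p2, neg_one_mul, one_mul, tsum_neg, h2.tsum_eq] at s2
  simp only [h1.tsum_eq, h2.tsum_eq] at s1
  rw [← s2]
  norm_num at s1 ⊢
  linear_combination -s1

lemma sigma1_eq (k : ℕ) : sigma1 k = ArithmeticFunction.sigma 1 k := by
  rw [ArithmeticFunction.sigma_one_apply, sigma1]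

lemma hasSum_sigma1 {x : ℂ} (hx : ‖x‖ < 1) :
    HasSum (fun k : ℕ ↦ (sigma1 (k + 1) : ℂ) * x ^ (k + 1)) (lambert x) := by
  have hs : Summable fun k : ℕ ↦ (sigma1 (k + 1) : ℂ) * x ^ (k + 1) := by
    have h2 := (summable_nat_add_iff 1).mpr (summable_norm_pow_mul_geometric_of_norm_lt_one 2 hx)
    refine .of_norm_bounded h2 fun k ↦ ?_
    rw [norm_mul, norm_mul, norm_pow ((k + 1 : ℕ) : ℂ), Complex.norm_natCast, Complex.norm_natCast,
      sigma1_eq]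
    gcongr
    exact_mod_cast ArithmeticFunction.sigma_le_pow_succ 1 (k + 1)
  have inner (d : ℕ+) : ∑' c : ℕ+, (c : ℂ) ^ 1 * x ^ (d * c : ℕ) =
      x ^ (d : ℕ) / (1 - x ^ (d : ℕ)) ^ 2 := by
    have hd : ‖x ^ (d : ℕ)‖ < 1 := by
      simpa [PNat.natPred_add_one] using norm_pow_succ_lt_one hx d.natPred
    rw [← tsum_coe_mul_geometric_of_norm_lt_one hd,
      ← tsum_zero_pnat_eq_tsum_nat (hasSum_coe_mul_geometric_of_norm_lt_one hd).summable]
    simp [pow_mul]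
  have h := tsum_prod_pow_eq_tsum_sigma 1 hx
  simp only [inner] at h
  rw [tsum_pnat_eq_tsum_succ (f := fun d ↦ x ^ d / (1 - x ^ d) ^ 2),
    tsum_pnat_eq_tsum_succ (f := fun e ↦ (ArithmeticFunction.sigma 1 e : ℂ) * x ^ e)] at h
  simp only [← sigma1_eq] at h
  rw [lambert, h]
  exact hs.hasSum

lemma norm_qc_lt_one {τ : ℂ} (hτ : 0 < τ.im) : ‖qc τ‖ < 1 := by
  simpa [qc] using UpperHalfPlane.norm_exp_two_pi_I_lt_one ⟨τ, hτ⟩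

lemma Lam_eq {τ : ℂ} (hτ : 0 < τ.im) (N : ℕ) (hN : N ≠ 0) :
    Lam N τ = (N : ℂ) * ((N : ℂ) - 1) / 24 +
      (N : ℂ) * (lambert (qc τ) - N * lambert (qc τ ^ N)) := by
  have hq := norm_qc_lt_one hτ
  have hqN : ‖qc τ ^ N‖ < 1 := by
    rw [norm_pow]
    exact pow_lt_one₀ (norm_nonneg _) hq hN
  have h := (hasSum_sigma1 hq).sub ((hasSum_sigma1 hqN).mul_left (N : ℂ))
  rw [Lam, ← h.tsum_eq]
  congr 3
  ext k
  rw [← pow_mul]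
  ring

lemma eta_quotient {τ : ℂ} :
    eta τ ^ 8 / eta (2 * τ) ^ 4 = (∏' n : ℕ, (1 - qc τ ^ (n + 1))) ^ 8 /
      (∏' n : ℕ, (1 - (qc τ ^ 2) ^ (n + 1))) ^ 4 := by
  have h1 : qc (2 * τ) = qc τ ^ 2 := by
    rw [qc, qc, ← Complex.exp_nat_mul]
    congr 1
    push_cast
    ring
  have h2 : Complex.exp (Real.pi * Complex.I * (2 * τ) / 12) ^ 4 =
      Complex.exp (Real.pi * Complex.I * τ / 12) ^ 8 := by
    rw [← Complex.exp_nat_mul, ← Complex.exp_nat_mul]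
    congr 1
    push_cast
    ring
  rw [eta, eta, h1, mul_pow, mul_pow, h2,
    mul_div_mul_left _ _ (pow_ne_zero 8 (Complex.exp_ne_zero _))]

/-- class 2B of M₂₄: `-24Λ₂(τ) + 8Λ₄(τ) = 2η(τ)⁸/η(2τ)⁴`. -/
theorem stmt_10 (τ : ℂ) (hτ : 0 < τ.im) :
    -24 * Lam 2 τ + 8 * Lam 4 τ = 2 * eta τ ^ 8 / eta (2 * τ) ^ 4 := by
  have hq := norm_qc_lt_one hτ
  have hP2 := tprod_one_sub_ne_zero (norm_sq_lt_one hq)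
  rw [mul_div_assoc, eta_quotient, ← infinite_identity hq, alternating_eq hq,
    mul_div_cancel_left₀ _ (pow_ne_zero 4 hP2), Lam_eq hτ 2 (by norm_num),
    Lam_eq hτ 4 (by norm_num)]
  push_cast
  ring
end

section
/- For every τ ∈ ℍ: 4·Λ₂(τ) − 6·Λ₄(τ) + 2·Λ₈(τ) = 2·η(2τ)⁸/η(4τ)⁴. (This is the identity from the 4A row of the paper's table of twining data: the eta-quotient expression for T̃_{4A} agrees with its expression in terms of the weight-two Eisenstein-type forms Λ_N.) -/
section

open Complex Filter Topology ModularForm EisensteinSeries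
open UpperHalfPlane hiding I
open scoped Real MatrixGroups

namespace Twining

/-! ### Series and products in the nome -/

/-- The power series `∑_{n ≥ 0} σ₁(n + 1) xⁿ`, that is `(1 - E₂) / (24 x)` as a series in `x = q`.
Its shift by one makes the value at `0`, needed for limits at `i∞`, equal to `1`. -/
noncomputable def sigSeries (x : ℂ) : ℂ := ∑' n : ℕ, (sigma1 (n + 1) : ℂ) * x ^ n

/-- The Eisenstein series `E₂(z) = 1 - 24 ∑_{k ≥ 1} σ₁(k) qᵏ`, as a function on all of `ℂ`, so that
it can be evaluated at `2z`, `z/2` and `(z+1)/2` without coercions from `ℍ`. -/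
noncomputable def eis (z : ℂ) : ℂ := 1 - 24 * (qc z * sigSeries (qc z))

/-- The Euler product `∏_{n ≥ 1} (1 - xⁿ)`. -/
noncomputable def eulerProd (x : ℂ) : ℂ := ∏' n : ℕ, (1 - x ^ (n + 1))

lemma sigma1_eq (n : ℕ) : sigma1 n = ArithmeticFunction.sigma 1 n := by
  simp [sigma1, ArithmeticFunction.sigma_one_apply]

lemma norm_sigma1_le (n : ℕ) : ‖(sigma1 n : ℂ)‖ ≤ (n : ℝ) ^ 2 := by
  rw [Complex.norm_natCast, sigma1_eq]
  exact_mod_cast ArithmeticFunction.sigma_le_pow_succ 1 n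

lemma summable_bound {r : ℝ} (h0 : 0 ≤ r) (h1 : r < 1) :
    Summable fun n : ℕ => ((n + 1 : ℕ) : ℝ) ^ 2 * r ^ n := by
  have h := fun k => summable_pow_mul_geometric_of_norm_lt_one (R := ℝ) k
    (r := r) (by rwa [Real.norm_of_nonneg h0])
  refine (((h 2).add ((h 1).mul_left 2)).add (h 0)).congr fun n => ?_
  push_cast; ring

lemma summable_sigSeries {x : ℂ} (hx : ‖x‖ < 1) :
    Summable fun n : ℕ => (sigma1 (n + 1) : ℂ) * x ^ n := by
  refine .of_norm_bounded (summable_bound (norm_nonneg x) hx) fun n => ?_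
  rw [norm_mul, norm_pow]
  gcongr
  exact norm_sigma1_le _

lemma tendsto_sigSeries : Tendsto sigSeries (𝓝 0) (𝓝 1) := by
  have h := tendsto_tsum_of_dominated_convergence (𝓕 := 𝓝 (0 : ℂ))
    (f := fun (x : ℂ) (n : ℕ) => (sigma1 (n + 1) : ℂ) * x ^ n)
    (g := fun n => (sigma1 (n + 1) : ℂ) * 0 ^ n)
    (summable_bound (r := 1 / 2) (by norm_num) (by norm_num))
    (fun n => ((continuous_const.mul (continuous_pow n)).tendsto 0)) (by
      filter_upwards [Metric.ball_mem_nhds (0 : ℂ) (by norm_num : (0 : ℝ) < 1 / 2)] with x hx n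
      rw [norm_mul, norm_pow]
      have := (mem_ball_zero_iff.mp hx).le
      gcongr
      exact norm_sigma1_le _)
  rw [tsum_eq_single 0 (by intro n hn; simp [hn])] at h
  rwa [zero_add, pow_zero, mul_one, show sigma1 1 = 1 by simp [sigma1], Nat.cast_one] at h

lemma tendsto_eulerProd : Tendsto eulerProd (𝓝 0) (𝓝 1) := by
  have h := (differentiableOn_tprod_one_sub_pow.differentiableAt
    (Metric.ball_mem_nhds (0 : ℂ) one_pos)).continuousAt.tendsto
  simpa [eulerProd] using! h

lemma norm_qc_lt_one {z : ℂ} (hz : 0 < z.im) : ‖qc z‖ < 1 :=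
  UpperHalfPlane.norm_exp_two_pi_I_lt_one ⟨z, hz⟩

lemma qc_nat_mul (n : ℕ) (z : ℂ) : qc (n * z) = qc z ^ n := by
  rw [qc, qc, ← Complex.exp_nat_mul]; ring_nf

lemma qc_add_one (z : ℂ) : qc (z + 1) = qc z := by
  rw [qc, qc, mul_add, mul_one, Complex.exp_add, Complex.exp_two_pi_mul_I, mul_one]

/-! ### Transformation laws of the Eisenstein series and the eta function -/

lemma eis_eq_E2 (z : ℍ) : eis z = E2 z := by
  rw [E2_eq_tsum_cexp, tsum_pnat_eq_tsum_succ
    (f := fun n => (ArithmeticFunction.sigma 1 n : ℂ) * cexp (2 * π * I * z) ^ n), eis, sigSeries,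
    ← tsum_mul_left]
  congr 2
  refine tsum_congr fun n => ?_
  rw [sigma1_eq, qc, pow_succ]; ring

lemma eta_eq (z : ℂ) : _root_.eta z = ModularForm.eta z := by
  rw [_root_.eta, ModularForm.eta]
  congr 1
  · rw [Function.Periodic.qParam]; congr 1; push_cast; ring
  · refine tprod_congr fun n => ?_
    rw [eta_q_eq_pow, qc]

lemma eta_eq_eulerProd (z : ℂ) : ModularForm.eta z = cexp (π * I * z / 12) * eulerProd (qc z) := by
  rw [← eta_eq, _root_.eta, eulerProd]

lemma eis_add_one (z : ℂ) : eis (z + 1) = eis z := by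
  rw [eis, eis, qc_add_one]

lemma eis_S {z : ℂ} (hz : 0 < z.im) : eis (-1 / z) = z ^ 2 * eis z + 6 * z / (π * I) := by
  have h0 : z ≠ 0 := by rintro rfl; simp at hz
  have h := G2_S_transform ⟨z, hz⟩
  have h2 := eis_eq_E2 (ModularGroup.S • ⟨z, hz⟩)
  have h1 := eis_eq_E2 ⟨z, hz⟩
  have e : ((ModularGroup.S • (⟨z, hz⟩ : ℍ) : ℍ) : ℂ) = -1 / z := by
    rw [modular_S_smul]; simp [neg_div, inv_neg]
  rw [e] at h2
  rw [h2, h1, E2]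
  simp only [Pi.smul_apply, smul_eq_mul]
  rw [h, riemannZeta_two]
  have hpi : (π : ℂ) ≠ 0 := by exact_mod_cast Real.pi_ne_zero
  field_simp
  ring_nf
  simp only [I_sq]
  ring

lemma eta_add_one (z : ℂ) :
    ModularForm.eta (z + 1) = cexp (π * I / 12) * ModularForm.eta z := by
  rw [eta_eq_eulerProd, eta_eq_eulerProd, qc_add_one, ← mul_assoc, ← Complex.exp_add]
  ring_nf

/-- The fourth power removes the choice of branch of the square root in the `η` functional equation. -/
lemma csqrt_pow_four {z : ℂ} (hz : z ≠ 0) : Complex.sqrt z ^ 4 = z ^ 2 := by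
  rw [sqrt_eq_exp hz, ← exp_nat_mul,
    show ((4 : ℕ) : ℂ) * (Complex.log z / 2) = (2 : ℕ) * Complex.log z by push_cast; ring,
    exp_nat_mul, exp_log hz]

/-- The fourth power of `η(-1/z) = √(z/i) η(z)`. -/
lemma eta_S {z : ℂ} (hz : 0 < z.im) :
    ModularForm.eta (-1 / z) ^ 4 = -z ^ 2 * ModularForm.eta z ^ 4 := by
  have h0 : z ≠ 0 := by rintro rfl; simp at hz
  have h : ModularForm.eta (-1 / z) = (Complex.sqrt I)⁻¹ * (Complex.sqrt z * ModularForm.eta z) :=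
    by simpa using eta_comp_eq_csqrt_I_inv (x := z) hz
  rw [h, mul_pow, mul_pow, inv_pow, csqrt_pow_four I_ne_zero, csqrt_pow_four h0, I_sq]
  ring

lemma differentiableAt_eis {z : ℂ} (hz : 0 < z.im) : DifferentiableAt ℂ eis z := by
  have h := UpperHalfPlane.mdifferentiable_iff.mp E2_mdifferentiable
  have h2 := (h.congr (f₁ := eis) fun w hw => by
    simp [ofComplex_apply_of_im_pos (show 0 < w.im from hw), ← eis_eq_E2])
  exact h2.differentiableAt (isOpen_upperHalfPlaneSet.mem_nhds hz)

/-- A function holomorphic on the upper half-plane, with the weight-`k` behaviour under the generators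
`T` and `S` and with a limit at `i∞`, is a modular form of level one: a single limit suffices because
`SL(2, ℤ)` has one cusp. -/
lemma exists_modularForm (k : ℤ) (f : ℂ → ℂ)
    (hd : ∀ z : ℂ, 0 < z.im → DifferentiableAt ℂ f z)
    (hT : ∀ z : ℂ, 0 < z.im → f (z + 1) = f z)
    (hS : ∀ z : ℂ, 0 < z.im → f (-1 / z) = z ^ k * f z)
    (c : ℂ) (hb : Tendsto f (comap Complex.im atTop) (𝓝 c)) :
    ∃ F : ModularForm 𝒮ℒ k, ∀ z : ℍ, F z = f z := by
  have hS' : (fun z : ℍ => f z) ∣[k] ModularGroup.S = fun z : ℍ => f z := by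
    ext z
    have h := hS z z.2
    rw [SlashInvariantForm.slash_S_apply]
    change f (-(z : ℂ))⁻¹ * _ = _
    rw [show (-(z : ℂ))⁻¹ = -1 / z by rw [inv_neg]; ring, h, zpow_neg]
    have := zpow_ne_zero k z.ne_zero
    field_simp
  have hT' : (fun z : ℍ => f z) ∣[k] ModularGroup.T = fun z : ℍ => f z := by
    ext z
    rw [SL_slash_apply, modular_T_smul, ModularGroup.denom_apply]
    simp [ModularGroup.T, add_comm (1 : ℂ), hT z z.2]
  have hall := SlashInvariantForm.slash_action_generators_SL2Z hS' hT'
  refine ⟨{ toFun := fun z : ℍ => f z, slash_action_eq' := ?_, holo' := ?_, bdd_at_cusps' := ?_ },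
    fun z => rfl⟩
  · rintro A ⟨A, rfl⟩
    exact hall A
  · rw [UpperHalfPlane.mdifferentiable_iff]
    exact .congr (fun z hz => (hd z hz).differentiableWithinAt) fun z hz => by
      simp [ofComplex_apply_of_im_pos hz]
  · intro c' hc
    rw [Subgroup.IsArithmetic.isCusp_iff_isCusp_SL2Z] at hc
    rw [OnePoint.isBoundedAt_iff_forall_SL2Z hc]
    intro γ _
    rw [hall]
    exact (hb.comp tendsto_coe_atImInfty).isBigO_one ℝ

/-! ### Behaviour under `S` of the values at `2z`, `z/2` and `(z+1)/2` -/

lemma im_S {z : ℂ} (hz : 0 < z.im) : 0 < (-1 / z).im := by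
  simpa [neg_div, inv_neg] using UpperHalfPlane.im_inv_neg_coe_pos ⟨z, hz⟩

lemma im_half {z : ℂ} (hz : 0 < z.im) : 0 < (z / 2).im := by
  simpa using hz

lemma im_half_add {z : ℂ} (hz : 0 < z.im) : 0 < ((z + 1) / 2).im := by
  simpa using hz

lemma im_two_mul {z : ℂ} (hz : 0 < z.im) : 0 < (2 * z).im := by
  simpa using hz

lemma ne_zero_of_im {z : ℂ} (hz : 0 < z.im) : z ≠ 0 := by
  rintro rfl; simp at hz

lemma eta_ne {z : ℂ} (hz : 0 < z.im) : ModularForm.eta z ≠ 0 := eta_ne_zero hz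

lemma eis_two_mul_S {z : ℂ} (hz : 0 < z.im) :
    4 * eis (2 * (-1 / z)) = z ^ 2 * eis (z / 2) + 12 * z / (π * I) := by
  have h := eis_S (im_half hz)
  have h0 := ne_zero_of_im hz
  rw [show 2 * (-1 / z) = -1 / (z / 2) by field_simp, h]
  ring

lemma eis_half_S {z : ℂ} (hz : 0 < z.im) :
    eis (-1 / z / 2) = z ^ 2 * (4 * eis (2 * z)) + 12 * z / (π * I) := by
  have h := eis_S (im_two_mul hz)
  have h0 := ne_zero_of_im hz
  rw [show -1 / z / 2 = -1 / (2 * z) by field_simp, h]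
  ring

/-- The effect of `S` on `(z + 1) / 2`, as a word in the generators: `(z + 1) / 2 = T w` and
`(-1/z + 1) / 2 = S u` with `u = T⁻² S w`. The factors of automorphy combine through `u w = -z`. -/
lemma half_add_S_aux {z : ℂ} (hz : 0 < z.im) : ∃ w u : ℂ, 0 < w.im ∧ 0 < u.im ∧
    (z + 1) / 2 = w + 1 ∧ u + 1 + 1 = -1 / w ∧ (-1 / z + 1) / 2 = -1 / u ∧
    u * w = -z := by
  have hw : 0 < ((z - 1) / 2).im := by simpa using hz
  have hu : 0 < (-1 / ((z - 1) / 2) - 2).im := by simpa using im_S hw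
  have h0 := ne_zero_of_im hz
  have h1 : z - 1 ≠ 0 := fun h => by simp [h] at hw
  have e : -1 / ((z - 1) / 2) - 2 = -2 * z / (z - 1) := by field_simp; ring
  refine ⟨(z - 1) / 2, _, hw, hu, by ring, by ring, ?_, ?_⟩
  · rw [e]; field_simp; ring
  · rw [e]; field_simp

lemma eis_half_add_S {z : ℂ} (hz : 0 < z.im) :
    eis ((-1 / z + 1) / 2) = z ^ 2 * eis ((z + 1) / 2) + 12 * z / (π * I) := by
  obtain ⟨w, u, hw, hu, h1, h2, h3, h4⟩ := half_add_S_aux hz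
  have hwu : eis u = w ^ 2 * eis w + 6 * w / (π * I) := by
    rw [← eis_S hw, ← h2, eis_add_one, eis_add_one]
  have h5 : z = 2 * w + 1 := by linear_combination 2 * h1
  rw [h3, eis_S hu, hwu, h1, eis_add_one, show z ^ 2 = u ^ 2 * w ^ 2 by rw [← mul_pow, h4]; ring]
  have hpi : (π : ℂ) ≠ 0 := by exact_mod_cast Real.pi_ne_zero
  field_simp
  linear_combination (6 * u - 12) * h4 - 6 * u * h5

lemma eta_two_mul_S {z : ℂ} (hz : 0 < z.im) :
    16 * ModularForm.eta (2 * (-1 / z)) ^ 8 = z ^ 4 * ModularForm.eta (z / 2) ^ 8 := by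
  have h := eta_S (im_half hz)
  have h0 := ne_zero_of_im hz
  rw [show 2 * (-1 / z) = -1 / (z / 2) by field_simp, pow_mul _ 4 2, h]
  ring

lemma eta_half_S {z : ℂ} (hz : 0 < z.im) :
    ModularForm.eta (-1 / z / 2) ^ 8 = z ^ 4 * (16 * ModularForm.eta (2 * z) ^ 8) := by
  have h := eta_S (im_two_mul hz)
  have h0 := ne_zero_of_im hz
  rw [show -1 / z / 2 = -1 / (2 * z) by field_simp, pow_mul _ 4 2, h]
  ring

lemma eta_half_add_S {z : ℂ} (hz : 0 < z.im) :
    ModularForm.eta ((-1 / z + 1) / 2) ^ 8 = z ^ 4 * ModularForm.eta ((z + 1) / 2) ^ 8 := by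
  obtain ⟨w, u, hw, hu, h1, h2, h3, h4⟩ := half_add_S_aux hz
  have e : cexp (π * I / 12) ^ 24 = 1 := by
    rw [← Complex.exp_nat_mul, ← Complex.exp_two_pi_mul_I]; congr 1; push_cast; ring
  have hwu : cexp (π * I / 12) ^ 16 * ModularForm.eta u ^ 8 = w ^ 4 * ModularForm.eta w ^ 8 := by
    have h := congrArg (· ^ 2) (eta_S hw)
    simp only [← h2, eta_add_one] at h
    linear_combination h
  rw [h3, pow_mul _ 4 2, eta_S hu, h1, eta_add_one]
  have h6 : z ^ 4 = u ^ 4 * w ^ 4 := by rw [← mul_pow, h4]; ring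
  rw [h6]
  linear_combination u ^ 4 * cexp (π * I / 12) ^ 8 * hwu - u ^ 4 * ModularForm.eta u ^ 8 * e

/-! ### The three theta ratios and the modular group -/

/-- The quotient of `(4E₂(2z) - E₂((z+1)/2)) / 3` by `η(z/2)⁸ / η(z)⁴`, two expressions for `θ₄(z)⁴`. -/
noncomputable def ratioFour (z : ℂ) : ℂ :=
  (4 * eis (2 * z) - eis ((z + 1) / 2)) * ModularForm.eta z ^ 4 / (3 * ModularForm.eta (z / 2) ^ 8)

/-- The analogue of `ratioFour` for `θ₃⁴`, which is `θ₄⁴` translated by `1`. -/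
noncomputable def ratioThree (z : ℂ) : ℂ := ratioFour (z + 1)

/-- The analogue of `ratioFour` for `θ₂⁴`: the quotient of `(E₂((z+1)/2) - E₂(z/2)) / 3` by
`16 η(2z)⁸ / η(z)⁴`. -/
noncomputable def ratioTwo (z : ℂ) : ℂ :=
  (eis ((z + 1) / 2) - eis (z / 2)) * ModularForm.eta z ^ 4 /
    (48 * ModularForm.eta (2 * z) ^ 8)

lemma eis_two_mul_T (z : ℂ) : eis (2 * (z + 1)) = eis (2 * z) := by
  rw [show 2 * (z + 1) = 2 * z + 1 + 1 by ring, eis_add_one, eis_add_one]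

lemma eis_half_add_T (z : ℂ) : eis ((z + 1 + 1) / 2) = eis (z / 2) := by
  rw [show (z + 1 + 1) / 2 = z / 2 + 1 by ring, eis_add_one]

lemma eta_half_add_T (z : ℂ) :
    ModularForm.eta ((z + 1 + 1) / 2) = cexp (π * I / 12) * ModularForm.eta (z / 2) := by
  rw [show (z + 1 + 1) / 2 = z / 2 + 1 by ring, eta_add_one]

lemma eta_two_mul_T (z : ℂ) :
    ModularForm.eta (2 * (z + 1)) = cexp (π * I / 12) ^ 2 * ModularForm.eta (2 * z) := by
  rw [show 2 * (z + 1) = 2 * z + 1 + 1 by ring, eta_add_one, eta_add_one]; ring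

lemma ratioThree_eq (z : ℂ) : ratioThree z =
    (4 * eis (2 * z) - eis (z / 2)) * (cexp (π * I / 12) * ModularForm.eta z) ^ 4 /
      (3 * ModularForm.eta ((z + 1) / 2) ^ 8) := by
  rw [ratioThree, ratioFour, eis_two_mul_T, eis_half_add_T, eta_add_one]

lemma ratioThree_T (z : ℂ) : ratioThree (z + 1) = ratioFour z := by
  rw [ratioThree_eq, ratioFour, eis_two_mul_T, eta_add_one, eta_half_add_T]
  have h := Complex.exp_ne_zero (π * I / 12)
  set e := cexp (π * I / 12)
  rw [← mul_div_mul_left _ (3 * ModularForm.eta (z / 2) ^ 8) (pow_ne_zero 8 h)]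
  ring

lemma ratioTwo_T (z : ℂ) : ratioTwo (z + 1) = ratioTwo z := by
  rw [ratioTwo, ratioTwo, eis_half_add_T, eta_two_mul_T, eta_add_one]
  have h := Complex.exp_ne_zero (π * I / 12)
  have e12 : cexp (π * I / 12) ^ 12 = -1 := by
    rw [← Complex.exp_nat_mul, ← Complex.exp_pi_mul_I]; congr 1; push_cast; ring
  set e := cexp (π * I / 12)
  rw [← mul_div_mul_left _ (48 * ModularForm.eta (2 * z) ^ 8) (pow_ne_zero 16 h)]
  congr 1
  · linear_combination -(eis ((z + 1) / 2) - eis (z / 2)) * ModularForm.eta z ^ 4 * e ^ 4 * e12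
  · ring

lemma ratioFour_S {z : ℂ} (hz : 0 < z.im) : ratioFour (-1 / z) = ratioTwo z := by
  have h0 := pow_ne_zero 4 (ne_zero_of_im hz)
  rw [ratioFour, ratioTwo, eis_two_mul_S hz, eis_half_add_S hz, eta_S hz, eta_half_S hz,
    ← mul_div_mul_left _ (48 * ModularForm.eta (2 * z) ^ 8) h0]
  congr 1 <;> ring

lemma ratioTwo_S {z : ℂ} (hz : 0 < z.im) : ratioTwo (-1 / z) = ratioFour z := by
  have h := ratioFour_S (im_S hz)
  rw [← h]; congr 1
  have := ne_zero_of_im hz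
  field_simp

lemma ratioThree_S {z : ℂ} (hz : 0 < z.im) : ratioThree (-1 / z) = ratioThree z := by
  have h0 := pow_ne_zero 4 (ne_zero_of_im hz)
  rw [ratioThree_eq, ratioThree_eq, eis_two_mul_S hz, eis_half_S hz, mul_pow, eta_S hz,
    eta_half_add_S hz, ← mul_div_mul_left _ (3 * ModularForm.eta ((z + 1) / 2) ^ 8) h0]
  congr 1 <;> ring

/-! ### Limits at `i∞` -/

lemma qc_half_add (z : ℂ) : qc ((z + 1) / 2) = -qc (z / 2) := by
  rw [qc, qc, show 2 * π * I * ((z + 1) / 2) = 2 * π * I * (z / 2) + π * I by ring,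
    Complex.exp_add, Complex.exp_pi_mul_I]; ring

lemma qc_eq_sq (z : ℂ) : qc z = qc (z / 2) ^ 2 := by
  rw [← qc_nat_mul]; congr 1; push_cast; ring

lemma qc_two_mul (z : ℂ) : qc (2 * z) = qc (z / 2) ^ 4 := by
  rw [← qc_nat_mul]; congr 1; push_cast; ring

lemma tendsto_qc_half : Tendsto (fun z => qc (z / 2)) (comap Complex.im atTop) (𝓝 0) := by
  refine ((Function.Periodic.qParam_tendsto (h := 2) (by norm_num)).mono_right
    nhdsWithin_le_nhds).congr fun z => ?_
  rw [Function.Periodic.qParam, qc]; congr 1; push_cast; ring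

lemma tendsto_eis_aux {f : ℂ → ℂ} (hf : Tendsto (fun z => qc (f z)) (comap Complex.im atTop) (𝓝 0)) :
    Tendsto (fun z => eis (f z)) (comap Complex.im atTop) (𝓝 1) := by
  simpa [eis] using ((hf.mul (tendsto_sigSeries.comp hf)).const_mul 24).const_sub 1

lemma tendsto_qc_half_add :
    Tendsto (fun z => qc ((z + 1) / 2)) (comap Complex.im atTop) (𝓝 0) := by
  simpa [qc_half_add] using tendsto_qc_half.neg

lemma tendsto_qc : Tendsto (fun z => qc z) (comap Complex.im atTop) (𝓝 0) := by
  simpa [← qc_eq_sq] using tendsto_qc_half.pow 2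

lemma tendsto_qc_two_mul : Tendsto (fun z => qc (2 * z)) (comap Complex.im atTop) (𝓝 0) := by
  simpa [← qc_two_mul] using tendsto_qc_half.pow 4

/-! ### The Hecke relation -/

/-- The eigenvector relation of `E₂` for the Hecke operator at `2`. The anomalous terms of `E₂` under
`S` cancel in the difference of the two sides, which is thus a modular form of level one and weight
two, hence zero. -/
lemma eis_sum {z : ℂ} (hz : 0 < z.im) :
    4 * eis (2 * z) + eis (z / 2) + eis ((z + 1) / 2) = 6 * eis z := by
  obtain ⟨F, hF⟩ := exists_modularForm 2
    (fun z => 4 * eis (2 * z) + eis (z / 2) + eis ((z + 1) / 2) - 6 * eis z)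
    (fun z hz => by
      have h1 := (differentiableAt_eis (im_two_mul hz)).comp z
        (by fun_prop : DifferentiableAt ℂ (fun z => 2 * z) z)
      have h2 := (differentiableAt_eis (im_half hz)).comp z
        (by fun_prop : DifferentiableAt ℂ (fun z => z / 2) z)
      have h3 := (differentiableAt_eis (im_half_add hz)).comp z
        (by fun_prop : DifferentiableAt ℂ (fun z => (z + 1) / 2) z)
      exact (((h1.const_mul 4).add h2).add h3).sub ((differentiableAt_eis hz).const_mul 6))
    (fun z hz => by rw [eis_two_mul_T, eis_half_add_T, eis_add_one]; ring)
    (fun z hz => by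
      rw [eis_two_mul_S hz, eis_half_S hz, eis_half_add_S hz, eis_S hz, zpow_ofNat]; ring)
    (4 * 1 + 1 + 1 - 6 * 1)
    ((((tendsto_eis_aux tendsto_qc_two_mul).const_mul 4).add
      (tendsto_eis_aux tendsto_qc_half) |>.add (tendsto_eis_aux tendsto_qc_half_add)).sub
      ((tendsto_eis_aux tendsto_qc).const_mul 6))
  have h0 : F = 0 := rank_zero_iff_forall_zero.mp levelOne_weight_two_rank_zero F
  have h := hF ⟨z, hz⟩
  rw [h0] at h
  exact (sub_eq_zero.mp h.symm)

/-! ### Identification of the theta ratios -/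

/-- The exponential prefactors of the eta functions cancel, so that the limit at `i∞` is visible. -/
lemma ratioFour_eq (z : ℂ) : ratioFour z = (4 * eis (2 * z) - eis ((z + 1) / 2)) / 3 *
    (eulerProd (qc z) ^ 4 / eulerProd (qc (z / 2)) ^ 8) := by
  have h : cexp (π * I * (z / 2) / 12) ^ 8 = cexp (π * I * z / 12) ^ 4 := by
    rw [← Complex.exp_nat_mul, ← Complex.exp_nat_mul]; congr 1; push_cast; ring
  have h0 := Complex.exp_ne_zero (π * I * z / 12)
  rw [ratioFour, eta_eq_eulerProd, eta_eq_eulerProd, mul_pow, mul_pow, h, div_mul_div_comm,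
    ← mul_div_mul_left _ (3 * eulerProd (qc (z / 2)) ^ 8) (pow_ne_zero 4 h0)]
  congr 1 <;> ring

/-- The prefactors of the eta functions leave `q^{-1/2}`, which cancels the zero of
`E₂((z+1)/2) - E₂(z/2)` at `i∞`. -/
lemma ratioTwo_eq (z : ℂ) : ratioTwo z = (sigSeries (qc ((z + 1) / 2)) + sigSeries (qc (z / 2))) / 2
    * (eulerProd (qc z) ^ 4 / eulerProd (qc (2 * z)) ^ 8) := by
  have h : cexp (π * I * (2 * z) / 12) ^ 8 = qc (z / 2) * cexp (π * I * z / 12) ^ 4 := by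
    rw [qc, ← Complex.exp_nat_mul, ← Complex.exp_nat_mul, ← Complex.exp_add]
    congr 1; push_cast; ring
  have h0 := Complex.exp_ne_zero (π * I * z / 12)
  have h1 : 24 * qc (z / 2) ≠ 0 := mul_ne_zero (by norm_num) (Complex.exp_ne_zero _)
  rw [ratioTwo, eta_eq_eulerProd, eta_eq_eulerProd, mul_pow, mul_pow, h, div_mul_div_comm,
    ← mul_div_mul_left _ (2 * eulerProd (qc (2 * z)) ^ 8) (mul_ne_zero h1 (pow_ne_zero 4 h0)),
    eis, eis, qc_half_add]
  congr 1 <;> ring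

lemma tendsto_ratioFour : Tendsto ratioFour (comap Complex.im atTop) (𝓝 1) := by
  have h := (((tendsto_eis_aux tendsto_qc_two_mul).const_mul 4).sub
    (tendsto_eis_aux tendsto_qc_half_add)).div_const 3 |>.mul
    (((tendsto_eulerProd.comp tendsto_qc).pow 4).div
      ((tendsto_eulerProd.comp tendsto_qc_half).pow 8) (by norm_num))
  norm_num at h
  exact h.congr fun z => (ratioFour_eq z).symm

lemma tendsto_ratioThree : Tendsto ratioThree (comap Complex.im atTop) (𝓝 1) := by
  refine tendsto_ratioFour.comp (tendsto_comap_iff.mpr ?_)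
  exact tendsto_comap.congr fun z => by simp

lemma tendsto_ratioTwo : Tendsto ratioTwo (comap Complex.im atTop) (𝓝 1) := by
  have h := ((tendsto_sigSeries.comp tendsto_qc_half_add).add
    (tendsto_sigSeries.comp tendsto_qc_half)).div_const 2 |>.mul
    (((tendsto_eulerProd.comp tendsto_qc).pow 4).div
      ((tendsto_eulerProd.comp tendsto_qc_two_mul).pow 8) (by norm_num))
  norm_num at h
  exact h.congr fun z => (ratioTwo_eq z).symm

lemma differentiableAt_ratioFour {z : ℂ} (hz : 0 < z.im) : DifferentiableAt ℂ ratioFour z := by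
  have h1 := (differentiableAt_eis (im_two_mul hz)).comp z
    (by fun_prop : DifferentiableAt ℂ (fun z => 2 * z) z)
  have h3 := (differentiableAt_eis (im_half_add hz)).comp z
    (by fun_prop : DifferentiableAt ℂ (fun z => (z + 1) / 2) z)
  have h4 := differentiableAt_eta_of_mem_upperHalfPlaneSet (z := z) hz
  have h5 := (differentiableAt_eta_of_mem_upperHalfPlaneSet (im_half hz)).comp z
    (by fun_prop : DifferentiableAt ℂ (fun z => z / 2) z)
  exact (((h1.const_mul 4).sub h3).mul (h4.pow 4)).div ((h5.pow 8).const_mul 3)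
    (mul_ne_zero (by norm_num) (pow_ne_zero 8 (eta_ne (im_half hz))))

lemma differentiableAt_ratioThree {z : ℂ} (hz : 0 < z.im) : DifferentiableAt ℂ ratioThree z :=
  (differentiableAt_ratioFour (z := z + 1) (by simpa using hz)).comp z
    (by fun_prop : DifferentiableAt ℂ (fun z => z + 1) z)

lemma differentiableAt_ratioTwo {z : ℂ} (hz : 0 < z.im) : DifferentiableAt ℂ ratioTwo z := by
  have h := (differentiableAt_ratioFour (im_S hz)).comp z
    (DifferentiableAt.div (by fun_prop) (by fun_prop) (ne_zero_of_im hz) :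
      DifferentiableAt ℂ (fun z => -1 / z) z)
  refine h.congr_of_eventuallyEq ?_
  filter_upwards [isOpen_upperHalfPlaneSet.mem_nhds hz] with w hw using (ratioFour_S hw).symm

/-- The identity for `θ₄⁴`. As `c` is taken to be a value of `ratioFour`, the constant
`(R₄ - c)(R₃ - c)(R₂ - c)` vanishes, while its limit at `i∞` is `(1 - c)³`. -/
theorem ratioFour_eq_one {z : ℂ} (hz : 0 < z.im) : ratioFour z = 1 := by
  set c := ratioFour z with hc
  have hlim := ((tendsto_ratioFour.sub_const c).mul (tendsto_ratioThree.sub_const c)).mul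
    (tendsto_ratioTwo.sub_const c)
  -- The three ratios are permuted by `T` and by `S`, so the product is invariant.
  obtain ⟨F, hF⟩ := exists_modularForm 0
    (fun z => (ratioFour z - c) * (ratioThree z - c) * (ratioTwo z - c))
    (fun z hz => (((differentiableAt_ratioFour hz).sub_const c).mul
      ((differentiableAt_ratioThree hz).sub_const c)).mul
      ((differentiableAt_ratioTwo hz).sub_const c))
    (fun z hz => by rw [ratioThree_T, ratioTwo_T, ← ratioThree]; ring)
    (fun z hz => by rw [ratioFour_S hz, ratioThree_S hz, ratioTwo_S hz, zpow_zero]; ring)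
    _ hlim
  obtain ⟨d, hd⟩ := ModularFormClass.levelOne_weight_zero_const F
  have hd0 : d = 0 := by
    have h := hF ⟨z, hz⟩
    rw [hd] at h
    simpa [← hc] using h
  have h0 := hlim.comp tendsto_coe_atImInfty
  have h1 := tendsto_nhds_unique h0 (tendsto_const_nhds.congr fun w => by
    have h := hF w
    rw [hd, hd0] at h
    exact h)
  have h2 : (1 - c) ^ 3 = 0 := (pow_three' _).trans h1
  exact (sub_eq_zero.mp (pow_eq_zero_iff (by norm_num) |>.mp h2)).symm

/-! ### Expression of `Λ_N` through `E₂` -/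

/-- `Λ_N(z) = N (N E₂(Nz) - E₂(z)) / 24`; the splitting of the defining series rests on absolute
convergence for `|q| < 1`. -/
lemma Lam_eq {N : ℕ} (hN : N ≠ 0) {z : ℂ} (hz : 0 < z.im) :
    Lam N z = N * (N * eis (N * z) - eis z) / 24 := by
  have hq := norm_qc_lt_one hz
  have hqN : ‖qc z ^ N‖ < 1 := by
    rw [norm_pow]; exact pow_lt_one₀ (norm_nonneg _) hq hN
  have h1 := (summable_sigSeries hq).hasSum.mul_left (qc z)
  have h2 := ((summable_sigSeries hqN).hasSum.mul_left (qc z ^ N)).mul_left (N : ℂ)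
  have h := (h1.sub h2).tsum_eq
  rw [Lam, eis, eis, qc_nat_mul, sigSeries, sigSeries]
  rw [show (∑' k : ℕ, (sigma1 (k + 1) : ℂ) * (qc z ^ (k + 1) - (N : ℂ) * qc z ^ (N * (k + 1)))) = _
    from (tsum_congr fun k => by rw [pow_mul, pow_succ, pow_succ (qc z ^ N)]; ring).trans h]
  ring

theorem main {τ : ℂ} (hτ : 0 < τ.im) :
    4 * Lam 2 τ - 6 * Lam 4 τ + 2 * Lam 8 τ =
      2 * _root_.eta (2 * τ) ^ 8 / _root_.eta (4 * τ) ^ 4 := by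
  have h2 : 0 < (4 * τ).im := by simpa using hτ
  have h := ratioFour_eq_one h2
  have hs := eis_sum h2
  have hn := eta_ne (im_half h2)
  have hn' := eta_ne h2
  rw [Lam_eq (N := 2) (by norm_num) hτ, Lam_eq (N := 4) (by norm_num) hτ,
    Lam_eq (N := 8) (by norm_num) hτ, eta_eq, eta_eq]
  rw [ratioFour, div_eq_one_iff_eq (mul_ne_zero (by norm_num) (pow_ne_zero 8 hn))] at h
  rw [show 4 * τ / 2 = 2 * τ by ring, show 2 * (4 * τ) = 8 * τ by ring] at h hs
  rw [eq_div_iff (pow_ne_zero 4 hn')]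
  push_cast
  linear_combination (2 / 3) * h + (2 / 3) * ModularForm.eta (4 * τ) ^ 4 * hs

end Twining

end

/-- class 4A of M₂₄: `4Λ₂(τ) - 6Λ₄(τ) + 2Λ₈(τ) = 2η(2τ)⁸/η(4τ)⁴`. -/
theorem stmt_11 (τ : ℂ) (hτ : 0 < τ.im) :
    4 * Lam 2 τ - 6 * Lam 4 τ + 2 * Lam 8 τ = 2 * eta (2 * τ) ^ 8 / eta (4 * τ) ^ 4 :=
  Twining.main hτ
end
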